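/- For every square-free c ∈ ℤ[i] with c ≡ 1 (mod 16), the quadratic Gauss sum satisfies g(c) = (−1/c)₄ · N(c)^{1/2} = N(c)^{1/2} (with the convention g(1) = 1). -/

import Mathlib

open Complex GaussianInt MeasureTheory Asymptotics Filter
open scoped ComplexConjugate

noncomputable section

/-- The element `i` of `ℤ[i]`. -/
def gi : GaussianInt := ⟨0, 1⟩

/-- The norm `N(a+bi) = a² + b²` of a Gaussian integer, as a natural number. -/
def gnorm (a : GaussianInt) : ℕ := a.norm.natAbs

/-- An element of `ℤ[i]` is primary if it is `≡ 1 (mod (1+i)³)`. -/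
def IsPrimary (a : GaussianInt) : Prop := (1 + gi) ^ 3 ∣ a - 1

/-- `c ≡ 1 (mod 16)` in `ℤ[i]`. -/
def ModOne16 (c : GaussianInt) : Prop := (16 : GaussianInt) ∣ c - 1

open scoped Classical in
/-- The quartic residue symbol `(a/π)₄` for a prime `π` of odd norm:
the unique unit `u ∈ {±1, ±i}` with `a^((N(π)-1)/4) ≡ u (mod π)` if it exists
(i.e. when `π ∤ a`), and `0` otherwise. -/
def quarticSymbolPrime (a π : GaussianInt) : GaussianInt :=
  if h : ∃ u : GaussianInt, IsUnit u ∧ π ∣ a ^ ((gnorm π - 1) / 4) - u then h.choose else 0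

/-- The quartic residue symbol `(a/n)₄`, extended multiplicatively in the lower entry
(via a prime factorization of `n`; each prime factor's symbol only depends on its
associate class, so this is well defined). -/
def quarticSymbol (a n : GaussianInt) : GaussianInt :=
  ((UniqueFactorizationMonoid.factors n).map fun π => quarticSymbolPrime a π).prod

/-- The quadratic residue symbol `(a/n) = ((a/n)₄)²`. -/
def quadSymbol (a n : GaussianInt) : GaussianInt := quarticSymbol a n ^ 2

/-- A generator of an ideal of the principal ideal domain `ℤ[i]`. -/
def idealGen (A : Ideal GaussianInt) : GaussianInt := Submodule.IsPrincipal.generator A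

/-- The absolute norm of an ideal of `ℤ[i]`. -/
def idealNorm (A : Ideal GaussianInt) : ℕ := gnorm (idealGen A)

/-- The quadratic Hecke character `χ_c`, as a function of nonzero integral ideals:
`χ_c(A) = (α/c)` for a generator `α` of `A` (for square-free `c ≡ 1 (mod 16)` this is
independent of the generator, since `χ_c` is trivial on units). -/
def heckeChar (c : GaussianInt) (A : Ideal GaussianInt) : ℂ :=
  toComplex (quadSymbol (idealGen A) c)

/-- Predicate expressing that `L : ℂ → ℂ` is the analytic continuation of the
Hecke `L`-function `L(s, χ_c)`: it is given by the Dirichlet series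
`Σ_{0 ≠ A} χ_c(A) N(A)^{-s}` for `Re(s) > 1` and is differentiable away from `s = 1`
(at `s = 1` the principal character gives the Dedekind zeta function, which has a pole). -/
def IsHeckeL (c : GaussianInt) (L : ℂ → ℂ) : Prop :=
  (∀ s : ℂ, 1 < s.re → HasSum
      (fun A : {A : Ideal GaussianInt // A ≠ ⊥} =>
        heckeChar c A.1 * (idealNorm A.1 : ℂ) ^ (-s)) (L s)) ∧
  ∀ s : ℂ, s ≠ 1 → DifferentiableAt ℂ L s

/-- The constant `A = ∏_{π prime, (π,2)=1} (1 - 1/((N(π)+1)N(π)))`, the product running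
over the odd primes of `ℤ[i]` (equivalently, over odd nonzero prime ideals). -/
def eulerConstA : ℝ :=
  ∏' P : {P : Ideal GaussianInt // P.IsPrime ∧ P ≠ ⊥ ∧ (2 : GaussianInt) ∉ P},
    (1 - ((idealNorm P.1 + 1) * (idealNorm P.1) : ℝ)⁻¹)

/-- The value `ζ_{ℚ(i)}(2)` of the Dedekind zeta function of `ℚ(i)` at `2`. -/
def zetaQi2 : ℝ := ∑' A : {A : Ideal GaussianInt // A ≠ ⊥}, ((idealNorm A.1 : ℝ) ^ 2)⁻¹

/-- The additive character `ẽ(z) = exp(2πi(z/(2i) - z̄/(2i)))`. -/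
def eTilde (z : ℂ) : ℂ :=
  Complex.exp (2 * Real.pi * I * (z / (2 * I) - (conj z) / (2 * I)))

/-- The quadratic Gauss sum `g(n) = Σ_{x mod n} (x/n) ẽ(x/n)` (the sum over the finite
quotient `ℤ[i]/(n)`; each term is independent of the representative chosen). -/
def quadGaussSum (n : GaussianInt) : ℂ :=
  ∑' x : GaussianInt ⧸ Ideal.span {n},
    toComplex (quadSymbol (Quotient.out x) n) * eTilde (toComplex (Quotient.out x) / toComplex n)

/-- The weight `V(ξ) = (1/2πi)∫_{(2)} (Γ(s+1/2)/Γ(1/2)) ξ^{-s} ds/s`, the contour integral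
along the vertical line `Re(s) = 2` (parametrized by `s = 2 + iτ`). -/
def Vweight (ξ : ℝ) : ℂ :=
  (2 * Real.pi)⁻¹ * ∫ τ : ℝ,
    Complex.Gamma ((2 + τ * I) + 1 / 2) / Complex.Gamma (1 / 2) *
      (ξ : ℂ) ^ (-(2 + τ * I)) / (2 + τ * I)

/-!
Write `c = n d` where `n` is the gcd of the real and imaginary parts of `c`, and put `N = N(d)`,
`d = a + b i`. Then no rational prime divides `d`, so `ℤ/N ≅ ℤ[i]/(d)`, and square-freeness of `c`
makes `n` and `N` square-free and coprime. The residues modulo `c` are represented by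
`x = n y + d (u + v i)` with `y` modulo `N` and `u, v` modulo `n` (`tsum_quotient`). Both the
character and the symbol split along this decomposition:

* `ẽ(x/c) = e(-b y / N) e(v / n)`, since `ẽ(z) = e(Im z)`;
* `(x/d)` is the Jacobi symbol `(n y / N)` over `ℚ` (`quadSymbol_primitive`), and `(x/n)` is the
  Jacobi symbol `(N(x) / n) = (N / n) ((u² + v²) / n)` (`quadSymbol_natCast`).

Hence `g(c) = (N/n) (n/N) · ∑_y (y/N) e(-b y / N) · ∑_{u,v} ((u² + v²)/n) e(v/n)`. By quadratic
reciprocity the first two symbols cancel, as `N ≡ 1 (mod 4)`. The double sum equals `n`, by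
multiplicativity and a Jacobi sum evaluation at primes (`nGauss_eq`). Every prime factor of `N` is
`≡ 1 (mod 4)`, so the sum over `y` equals `(-b/N) √N` (`jGauss_eq`), by multiplicativity and the sign
of the classical quadratic Gauss sum. Finally `(-b/N) = 1` because `N = a² + b² ≡ a² (mod 4b)`, so
`g(c) = n √N = √N(c)`; and `(-1/c)₄ = 1` because `N(c) ≡ 1 (mod 8)`.

The sign of the classical sum (`gauss_sign`) is obtained by Gauss's own method: the identity
`∑_k (-1)^k [2s, k]_q = ∏_{j < s} (1 - q^(2j+1))` for Gaussian binomials, evaluated at a root of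
unity, turns the exponential sum into a product of sines whose sign can be read off.
-/

/-! ### The sign of the classical quadratic Gauss sum -/

/-- The additive character `t ↦ exp(2πit)` of `ℝ`. -/
def ec (t : ℝ) : ℂ := Complex.exp (2 * Real.pi * I * t)

lemma ec_add (s t : ℝ) : ec (s + t) = ec s * ec t := by
  unfold ec; rw [← Complex.exp_add]; congr 1; push_cast; ring

lemma ec_int (k : ℤ) : ec k = 1 := by
  unfold ec
  rw [← Complex.exp_int_mul_two_pi_mul_I k]; congr 1; push_cast; ring

lemma ec_nat_mul (k : ℕ) (t : ℝ) : ec (k * t) = ec t ^ k := by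
  unfold ec; rw [← Complex.exp_nat_mul]; congr 1; push_cast; ring

lemma ec_ne_zero (t : ℝ) : ec t ≠ 0 := Complex.exp_ne_zero _

lemma ec_eq_one_iff (t : ℝ) : ec t = 1 ↔ ∃ k : ℤ, t = k := by
  unfold ec
  rw [Complex.exp_eq_one_iff]
  have hpi : (2 * Real.pi * I : ℂ) ≠ 0 := Complex.two_pi_I_ne_zero
  refine exists_congr fun k => ?_
  rw [mul_comm (k : ℂ), mul_right_inj' hpi]
  norm_cast

lemma ec_sub_inv (t : ℝ) : ec t - (ec t)⁻¹ = 2 * I * (Real.sin (2 * Real.pi * t) : ℝ) := by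
  unfold ec
  rw [← Complex.exp_neg]
  push_cast
  rw [Complex.sin]
  have h1 : -(2 * Real.pi * (t : ℂ)) * I = -(2 * Real.pi * I * t) := by ring
  have h2 : (2 * Real.pi * (t : ℂ)) * I = 2 * Real.pi * I * t := by ring
  rw [h1, h2]
  linear_combination (cexp (2 * Real.pi * I * t) - cexp (-(2 * Real.pi * I * t))) * I_sq

/-- The Gaussian binomial coefficient `[m, k]_q` in product form; meaningful for `k ≤ m + 1`
and `q` not a root of unity of order at most `k`. -/
def qb (q : ℂ) (m k : ℕ) : ℂ := ∏ j ∈ Finset.range k, (1 - q ^ (m - j)) / (1 - q ^ (j + 1))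

lemma qb_absorb (q : ℂ) (m k : ℕ) (hq : q ^ (k + 1) ≠ 1) :
    (1 - q ^ (k + 1)) * qb q (m + 1) (k + 1) = (1 - q ^ (m + 1)) * qb q m k := by
  have h1 : 1 - q ^ (k + 1) ≠ 0 := sub_ne_zero.2 hq.symm
  unfold qb
  rw [Finset.prod_div_distrib, Finset.prod_div_distrib, Finset.prod_range_succ',
    Finset.prod_range_succ (fun j => 1 - q ^ (j + 1))]
  simp only [Nat.add_sub_add_right, Nat.sub_zero]
  field_simp

lemma qb_pascal (q : ℂ) (m k : ℕ) (hk : k ≤ m) (hq : q ^ (k + 1) ≠ 1) :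
    qb q (m + 1) (k + 1) = qb q m k + q ^ (k + 1) * qb q m (k + 1) := by
  have h1 : 1 - q ^ (k + 1) ≠ 0 := sub_ne_zero.2 hq.symm
  have h2 : qb q m (k + 1) = qb q m k * ((1 - q ^ (m - k)) / (1 - q ^ (k + 1))) := by
    unfold qb; rw [Finset.prod_range_succ]
  have h3 : q ^ (m + 1) = q ^ (m - k) * q ^ (k + 1) := by
    rw [← pow_add]; congr 1; omega
  have h4 := qb_absorb q m k hq
  apply mul_left_cancel₀ h1
  rw [h4, h2, h3]
  field_simp
  ring

lemma qb_zero (q : ℂ) (m : ℕ) : qb q m 0 = 1 := by simp [qb]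

lemma qb_succ_self (q : ℂ) (m : ℕ) : qb q m (m + 1) = 0 := by
  unfold qb; rw [Finset.prod_range_succ]; simp

lemma alt_qb_step (q : ℂ) (m : ℕ) (hq : ∀ k, 1 ≤ k → k ≤ m + 2 → q ^ k ≠ 1) :
    ∑ k ∈ Finset.range (m + 3), (-1) ^ k * qb q (m + 2) k =
      (1 - q ^ (m + 1)) * ∑ k ∈ Finset.range (m + 1), (-1) ^ k * qb q m k := by
  rw [Finset.sum_range_succ' _ (m + 2), qb_zero]
  have h1 : ∑ k ∈ Finset.range (m + 2), (-1) ^ (k + 1) * qb q (m + 2) (k + 1) =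
      - ∑ k ∈ Finset.range (m + 2), (-1) ^ k * qb q (m + 1) k +
      ∑ k ∈ Finset.range (m + 2), (-1) ^ (k + 1) * (q ^ (k + 1) * qb q (m + 1) (k + 1)) := by
    rw [← Finset.sum_neg_distrib, ← Finset.sum_add_distrib]
    refine Finset.sum_congr rfl fun k hk => ?_
    rw [Finset.mem_range] at hk
    rw [qb_pascal q (m + 1) k (by omega) (hq _ (by omega) (by omega))]
    ring
  rw [h1, Finset.sum_range_succ' _ (m + 1), Finset.sum_range_succ _ (m + 1), qb_succ_self, qb_zero,
    Finset.mul_sum]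
  have h2 : ∑ k ∈ Finset.range (m + 1), (1 - q ^ (m + 1)) * ((-1) ^ k * qb q m k) =
      - ∑ k ∈ Finset.range (m + 1), (-1) ^ (k + 1) * qb q (m + 1) (k + 1) +
      ∑ k ∈ Finset.range (m + 1), (-1) ^ (k + 1) * (q ^ (k + 1) * qb q (m + 1) (k + 1)) := by
    rw [← Finset.sum_neg_distrib, ← Finset.sum_add_distrib]
    refine Finset.sum_congr rfl fun k hk => ?_
    rw [Finset.mem_range] at hk
    have := qb_absorb q m k (hq _ (by omega) (by omega))
    rw [pow_succ]
    linear_combination -(-1) ^ k * this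
  rw [h2]
  ring

/-- Gauss's identity `∑ (-1)^k [2s, k]_q = (1 - q)(1 - q³)⋯(1 - q^(2s-1))`. -/
lemma alt_qb (q : ℂ) (s : ℕ) (hq : ∀ k, 1 ≤ k → k ≤ 2 * s → q ^ k ≠ 1) :
    ∑ k ∈ Finset.range (2 * s + 1), (-1) ^ k * qb q (2 * s) k =
      ∏ j ∈ Finset.range s, (1 - q ^ (2 * j + 1)) := by
  induction s with
  | zero => simp [qb_zero]
  | succ s ih =>
    rw [show 2 * (s + 1) = 2 * s + 2 by ring, alt_qb_step q (2 * s) (fun k h1 h2 => hq k h1 h2),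
      ih (fun k h1 h2 => hq k h1 (by omega)), Finset.prod_range_succ, mul_comm]

/-- When `q` is a primitive `n`-th root of unity with `q = w⁻²`, the Gaussian binomial
`[n - 1, k]_q` collapses, up to sign, to a power of `w`, so that the alternating sum of these
binomials becomes a quadratic exponential sum. -/
lemma qb_root (q : ℂ) (n k : ℕ) (hn : q ^ n = 1) (hk : k < n)
    (hq : ∀ k, 1 ≤ k → k < n → q ^ k ≠ 1) (w : ℂ) (hw : q * w ^ 2 = 1) :
    qb q (n - 1) k = (-1) ^ k * w ^ (k * (k + 1)) := by
  induction k with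
  | zero => simp [qb_zero]
  | succ k ih =>
    have h2 : qb q (n - 1) (k + 1) =
        qb q (n - 1) k * ((1 - q ^ (n - 1 - k)) / (1 - q ^ (k + 1))) := by
      unfold qb; rw [Finset.prod_range_succ]
    have h1 : 1 - q ^ (k + 1) ≠ 0 := sub_ne_zero.2 (hq _ (by omega) hk).symm
    have hw' : q ^ (k + 1) * w ^ (2 * (k + 1)) = 1 := by
      rw [pow_mul, ← mul_pow, hw, one_pow]
    have h3 : q ^ (n - 1 - k) = w ^ (2 * (k + 1)) := by
      have : q ^ (n - 1 - k) * q ^ (k + 1) = 1 := by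
        rw [← pow_add, ← hn]; congr 1; omega
      calc q ^ (n - 1 - k) = q ^ (n - 1 - k) * (q ^ (k + 1) * w ^ (2 * (k + 1))) := by
            rw [hw', mul_one]
        _ = _ := by rw [← mul_assoc, this, one_mul]
    have h4 : (1 - q ^ (n - 1 - k)) / (1 - q ^ (k + 1)) = - w ^ (2 * (k + 1)) := by
      rw [div_eq_iff h1, h3]
      linear_combination -hw'
    rw [h2, h4, ih (by omega), show (k + 1) * (k + 1 + 1) = k * (k + 1) + 2 * (k + 1) by ring,
      pow_add, pow_succ (-1 : ℂ)]
    ring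

lemma sum_range_shift (f : ℕ → ℂ) (n : ℕ) (hf : ∀ k, f (k + n) = f k) (h : ℕ) :
    ∑ k ∈ Finset.range n, f (k + h) = ∑ k ∈ Finset.range n, f k := by
  induction h with
  | zero => simp
  | succ h ih =>
    rw [← ih]
    have h1 := Finset.sum_range_succ (fun k => f (k + h)) n
    have h2 := Finset.sum_range_succ' (fun k => f (k + h)) n
    rw [h1] at h2
    have h3 : f (n + h) = f (0 + h) := by rw [add_comm n h, hf, zero_add]
    rw [h3] at h2
    rw [add_right_cancel h2]
    exact Finset.sum_congr rfl fun k _ => by rw [add_right_comm, add_assoc]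

/-- Gauss's determination of the sign: `∑ e(k²/n) > 0` for `n ≡ 1 (mod 4)`. -/
lemma gauss_sign (s : ℕ) : ∃ r : ℝ, 0 < r ∧
    ∑ k ∈ Finset.range (4 * s + 1), ec ((k : ℝ) ^ 2 / (4 * s + 1)) = r := by
  set n : ℕ := 4 * s + 1 with hn
  have hnR : (4 * (s : ℝ) + 1) = n := by rw [hn]; push_cast; ring
  have hn0 : (0 : ℝ) < n := by rw [hn]; positivity
  set w : ℂ := ec (1 / n) with hw
  have hw0 : w ≠ 0 := ec_ne_zero _
  have hpow : ∀ k : ℕ, w ^ k = ec (k / n) := fun k => by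
    rw [hw, ← ec_nat_mul]; congr 1; ring
  have hwn : w ^ n = 1 := by
    rw [hpow, div_self hn0.ne']; simpa using ec_int 1
  have hwk : ∀ k : ℕ, w ^ k = 1 → n ∣ k := by
    intro k hk
    rw [hpow, ec_eq_one_iff] at hk
    obtain ⟨j, hj⟩ := hk
    rw [div_eq_iff hn0.ne'] at hj
    have : (k : ℤ) = j * n := by exact_mod_cast hj
    exact Int.natCast_dvd_natCast.1 ⟨j, by rw [this, mul_comm]⟩
  set q : ℂ := (w ^ 2)⁻¹ with hq
  have hqw : q * w ^ 2 = 1 := inv_mul_cancel₀ (pow_ne_zero _ hw0)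
  have hqn : q ^ n = 1 := by rw [hq, inv_pow, ← pow_mul, mul_comm, pow_mul, hwn]; simp
  have hqk : ∀ k, 1 ≤ k → k < n → q ^ k ≠ 1 := by
    intro k h1 h2 h3
    rw [hq, inv_pow, inv_eq_one, ← pow_mul] at h3
    have h4 := hwk _ h3
    have h5 : n ∣ k := (Nat.Coprime.dvd_mul_left
      (by rw [hn]; exact (Nat.coprime_two_right.2 (by exact ⟨2 * s, by ring⟩)))).1 h4
    exact absurd (Nat.le_of_dvd (by omega) h5) (by omega)
  have hid := alt_qb q (2 * s) (fun k h1 h2 => hqk k h1 (by omega))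
  rw [show 2 * (2 * s) + 1 = n by omega] at hid
  have hL : ∑ k ∈ Finset.range n, (-1) ^ k * qb q (2 * (2 * s)) k =
      ∑ k ∈ Finset.range n, w ^ (k * (k + 1)) := by
    refine Finset.sum_congr rfl fun k hk => ?_
    rw [show 2 * (2 * s) = n - 1 by omega,
      qb_root q n k hqn (Finset.mem_range.1 hk) hqk w hqw, ← mul_assoc, ← mul_pow]
    simp
  have hS : ∑ k ∈ Finset.range n, ec ((k : ℝ) ^ 2 / (4 * s + 1)) =
      w ^ ((2 * s + 1) ^ 2) * ∑ k ∈ Finset.range n, w ^ (k * (k + 1)) := by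
    have h1 : ∀ k : ℕ, ec ((k : ℝ) ^ 2 / (4 * s + 1)) = w ^ (k ^ 2) := fun k => by
      rw [hpow, hnR]; push_cast; rfl
    simp only [h1]
    rw [← sum_range_shift (fun k => w ^ (k ^ 2)) n _ (2 * s + 1), Finset.mul_sum]
    · refine Finset.sum_congr rfl fun k _ => ?_
      -- completing the square: `2(2s + 1) ≡ 1 (mod n)`
      rw [← pow_add, show (k + (2 * s + 1)) ^ 2 = (2 * s + 1) ^ 2 + k * (k + 1) + n * k by
        rw [hn]; ring, pow_add _ _ (n * k), pow_mul w n, hwn, one_pow, mul_one]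
    · intro k
      show w ^ ((k + n) ^ 2) = w ^ (k ^ 2)
      rw [show (k + n) ^ 2 = k ^ 2 + n * (2 * k + n) by ring, pow_add, pow_mul w n, hwn, one_pow,
        mul_one]
  have hfac : ∀ m : ℕ, 1 - q ^ m = (w ^ m)⁻¹ * (2 * I *
      (Real.sin (2 * Real.pi * (m / n)) : ℝ)) := by
    intro m
    rw [← ec_sub_inv, ← hpow, hq, inv_pow, ← pow_mul, mul_comm 2 m, pow_mul]
    have := pow_ne_zero m hw0
    field_simp
  have hsum : ∀ t : ℕ, ∏ j ∈ Finset.range t, w ^ (2 * j + 1) = w ^ (t ^ 2) := by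
    intro t
    induction t with
    | zero => simp
    | succ t ih => rw [Finset.prod_range_succ, ih, ← pow_add]; congr 1; ring
  have hI : (2 * I) ^ (2 * s) = ((∏ j ∈ Finset.range s, (-4 : ℝ) : ℝ) : ℂ) := by
    rw [pow_mul, mul_pow, I_sq]; simp; norm_num
  -- In `∏_{j < 2s} sin(2π(2j+1)/n)` the first `s` factors are positive and the last `s` negative,
  -- which cancels the sign of `(2i)^(2s) = (-4)^s`.
  refine ⟨∏ j ∈ Finset.range s, (4 * Real.sin (2 * Real.pi * ((2 * j + 1 : ℕ) / n)) *
    -Real.sin (2 * Real.pi * ((2 * (s + j) + 1 : ℕ) / n))), ?_, ?_⟩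
  · refine Finset.prod_pos fun j hj => ?_
    rw [Finset.mem_range] at hj
    have hpi := Real.pi_pos
    refine mul_pos (mul_pos (by norm_num) (Real.sin_pos_of_pos_of_lt_pi (by positivity) ?_)) ?_
    · have : ((2 * j + 1 : ℕ) : ℝ) / n < 1 / 2 := by
        rw [div_lt_iff₀ hn0]
        have : 2 * (2 * j + 1) < n := by omega
        have : (2 * (2 * j + 1 : ℕ) : ℝ) < n := by exact_mod_cast this
        linarith
      nlinarith
    · rw [neg_pos, ← neg_pos, ← Real.sin_sub_pi]
      refine Real.sin_pos_of_pos_of_lt_pi ?_ ?_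
      · have : 1 / 2 < ((2 * (s + j) + 1 : ℕ) : ℝ) / n := by
          rw [lt_div_iff₀ hn0]
          have : n < 2 * (2 * (s + j) + 1) := by omega
          have : (n : ℝ) < (2 * (2 * (s + j) + 1 : ℕ) : ℝ) := by exact_mod_cast this
          linarith
        nlinarith
      · have : ((2 * (s + j) + 1 : ℕ) : ℝ) / n < 1 := by
          rw [div_lt_one hn0]
          have : (2 * (s + j) + 1) < n := by omega
          exact_mod_cast this
        nlinarith
  · rw [hS, ← hL, hid]
    simp only [hfac]
    rw [Finset.prod_mul_distrib, Finset.prod_inv_distrib, hsum, Finset.prod_mul_distrib,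
      Finset.prod_const, Finset.card_range, hI, two_mul s, Finset.prod_range_add, ← two_mul s]
    have hw1 : w ^ ((2 * s + 1) ^ 2) * (w ^ ((2 * s) ^ 2))⁻¹ = 1 := by
      rw [show (2 * s + 1) ^ 2 = (2 * s) ^ 2 + n by rw [hn]; ring, pow_add, hwn]
      field_simp
    rw [← mul_assoc, hw1, one_mul]
    push_cast
    rw [← Finset.prod_mul_distrib, ← Finset.prod_mul_distrib]
    refine Finset.prod_congr rfl fun j _ => ?_
    ring

/-! ### Gauss sums attached to Jacobi symbols -/

lemma ec_add_int (t : ℝ) (k : ℤ) : ec (t + k) = ec t := by rw [ec_add, ec_int, mul_one]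

lemma sum_range_eq_zmod (N : ℕ) [NeZero N] (f : ZMod N → ℂ) :
    ∑ k ∈ Finset.range N, f k = ∑ a : ZMod N, f a :=
  Finset.sum_nbij' (fun k => (k : ZMod N)) ZMod.val (by simp)
    (fun a _ => Finset.mem_range.2 a.val_lt)
    (fun k hk => ZMod.val_cast_of_lt (Finset.mem_range.1 hk)) (by simp) (by simp)

lemma ec_eq_stdAddChar (N : ℕ) [NeZero N] (j : ℤ) :
    ec (j / N) = ZMod.stdAddChar (N := N) (j : ZMod N) := by
  rw [ZMod.stdAddChar_coe]; unfold ec; congr 1; push_cast; ring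

/-- Chinese remainder theorem: `N a + M b` runs over the residues modulo `M N`. -/
lemma crt_sum (M N : ℕ) (hM : 0 < M) (hN : 0 < N) (hMN : M.Coprime N) (f : ℤ → ℂ)
    (hf : ∀ x k : ℤ, f (x + M * N * k) = f x) :
    ∑ x ∈ Finset.range (M * N), f x =
      ∑ a ∈ Finset.range M, ∑ b ∈ Finset.range N, f (N * a + M * b) := by
  rw [← Finset.sum_product']
  symm
  have hmem : ∀ x ∈ Finset.range M ×ˢ Finset.range N,
      (N * x.1 + M * x.2) % (M * N) ∈ Finset.range (M * N) := fun x _ =>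
    Finset.mem_range.2 (Nat.mod_lt _ (Nat.mul_pos hM hN))
  have hinj : Set.InjOn (fun x : ℕ × ℕ => (N * x.1 + M * x.2) % (M * N))
      (Finset.range M ×ˢ Finset.range N : Finset (ℕ × ℕ)) := by
    rintro ⟨a, b⟩ h1 ⟨a', b'⟩ h2 h
    simp only [Finset.coe_product, Finset.coe_range, Set.mem_prod, Set.mem_Iio] at h1 h2
    change N * a + M * b ≡ N * a' + M * b' [MOD M * N] at h
    have hA : N * a ≡ N * a' [MOD M] := by
      have := h.of_mul_right N
      simpa [Nat.ModEq, Nat.add_mul_mod_self_left] using this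
    have hB : M * b ≡ M * b' [MOD N] := by
      have := h.of_mul_left M
      simpa [Nat.ModEq, Nat.mul_add_mod_self_left] using this
    have hA' := Nat.ModEq.cancel_left_of_coprime hMN hA
    have hB' := Nat.ModEq.cancel_left_of_coprime hMN.symm hB
    exact Prod.ext (hA'.eq_of_lt_of_lt h1.1 h2.1) (hB'.eq_of_lt_of_lt h1.2 h2.2)
  refine Finset.sum_nbij (fun x : ℕ × ℕ => (N * x.1 + M * x.2) % (M * N)) hmem hinj
    (Finset.surjOn_of_injOn_of_card_le _ hmem hinj (by simp)) ?_
  rintro ⟨a, b⟩ _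
  have h := Nat.mod_add_div (N * a + M * b) (M * N)
  have h' : (N * a + M * b : ℤ) = ((N * a + M * b) % (M * N) : ℕ) +
      M * N * ((N * a + M * b) / (M * N) : ℕ) := by exact_mod_cast h.symm
  show f (N * a + M * b) = _
  rw [h', hf]

section Prime

variable (p : ℕ) [Fact p.Prime]

/-- The quadratic character of `ZMod p` with complex values. -/
def qc : MulChar (ZMod p) ℂ := (quadraticChar (ZMod p)).ringHomComp (Int.castRingHom ℂ)

lemma qc_apply (a : ZMod p) : qc p a = (quadraticChar (ZMod p) a : ℂ) := rfl

lemma jacobi_eq_qc (y : ℤ) : (jacobiSym y p : ℂ) = qc p y := by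
  rw [← jacobiSym.legendreSym.to_jacobiSym]; rfl

lemma sum_stdAddChar : ∑ a, ZMod.stdAddChar (N := p) a = 0 :=
  AddChar.sum_eq_zero_of_ne_one
    (by simpa using ZMod.isPrimitive_stdAddChar p (one_ne_zero (α := ZMod p)))

lemma ringChar_ne (hp : p ≠ 2) : ringChar (ZMod p) ≠ 2 := by rwa [ZMod.ringChar_zmod_n]

lemma qc_ne_one (hp : p ≠ 2) : qc p ≠ 1 := by
  rw [qc, Ne, MulChar.ringHomComp_eq_one_iff Int.cast_injective]
  exact quadraticChar_ne_one (ringChar_ne p hp)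

/-- The number of square roots of `a` in `ZMod p` is `1 + (a/p)`. -/
lemma sum_comp_sq (hp : p ≠ 2) (h : ZMod p → ℂ) : ∑ x, h (x ^ 2) = ∑ a, (qc p a + 1) * h a := by
  rw [← Finset.sum_fiberwise Finset.univ (fun x : ZMod p => x ^ 2)]
  refine Finset.sum_congr rfl fun a _ => ?_
  rw [Finset.sum_congr rfl (g := fun _ => h a)
    (fun x hx => by rw [(Finset.mem_filter.1 hx).2]), Finset.sum_const, nsmul_eq_mul]
  congr 1
  have := quadraticChar_card_sqrts (ringChar_ne p hp) a
  rw [Set.toFinset_ofPred] at this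
  rw [qc_apply]
  exact_mod_cast this

/-- The square of the Gauss sum is `p`, and its sign is that of `∑ e(k²/p)`. -/
lemma gaussSum_qc (hp : p ≠ 2) (hp4 : p % 4 = 1) : gaussSum (qc p) ZMod.stdAddChar = (Real.sqrt p : ℝ) := by
  have h1 : ∑ x, ZMod.stdAddChar (N := p) (x ^ 2) = gaussSum (qc p) ZMod.stdAddChar := by
    rw [sum_comp_sq p hp]
    simp only [add_mul, one_mul, Finset.sum_add_distrib, sum_stdAddChar p, add_zero]
    rfl
  have h2 : gaussSum (qc p) ZMod.stdAddChar ^ 2 = p := by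
    rw [gaussSum_sq (qc_ne_one p hp) ((quadraticChar_isQuadratic _).comp _)
      (ZMod.isPrimitive_stdAddChar p), ZMod.card, qc_apply,
      quadraticChar_neg_one (ringChar_ne p hp), ZMod.card, ZMod.χ₄_nat_one_mod_four hp4]
    simp
  obtain ⟨r, hr, hs⟩ := gauss_sign (p / 4)
  have h3 : 4 * (p / 4) + 1 = p := by omega
  have h3' : (4 * ((p / 4 : ℕ) : ℝ) + 1) = p := by exact_mod_cast h3
  rw [h3, h3'] at hs
  have h4 : gaussSum (qc p) ZMod.stdAddChar = r := by
    rw [← h1, ← hs, ← sum_range_eq_zmod p (fun x => ZMod.stdAddChar (x ^ 2))]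
    refine Finset.sum_congr rfl fun k _ => ?_
    have := ec_eq_stdAddChar p ((k : ℤ) ^ 2)
    push_cast at this
    rw [this]
  rw [h4] at h2 ⊢
  have h5 : r ^ 2 = p := by exact_mod_cast h2
  rw [← h5, Real.sqrt_sq hr.le]

lemma gaussSum_qc_mulShift (hp : p ≠ 2) (m : ZMod p) :
    gaussSum (qc p) (AddChar.mulShift ZMod.stdAddChar m) =
      qc p m * gaussSum (qc p) ZMod.stdAddChar := by
  by_cases hm : m = 0
  · subst hm
    rw [AddChar.mulShift_zero, gaussSum_one_right (qc_ne_one p hp), MulChar.map_zero, zero_mul]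
  · have h := gaussSum_mulShift (qc p) ZMod.stdAddChar (Units.mk0 m hm)
    rw [Units.val_mk0] at h
    have h1 : qc p m * qc p m = 1 := by
      rw [qc_apply, ← sq]; exact_mod_cast quadraticChar_sq_one hm
    rw [← h, ← mul_assoc, h1, one_mul]

lemma sum_qc (hp : p ≠ 2) : ∑ a, qc p a = 0 := MulChar.sum_eq_zero_of_ne_one (qc_ne_one p hp)

/-- Counting points on `u² + v² = a` with `v` fixed: for `v ≠ 0` the sum is a Jacobi sum
`J(χ, χ) = J(χ, χ⁻¹) = -χ(-1)`. -/
lemma sum_qc_sq_add (hp : p ≠ 2) (v : ZMod p) :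
    ∑ u, qc p (u ^ 2 + v ^ 2) = (if v = 0 then (p : ℂ) else 0) - 1 := by
  rw [sum_comp_sq p hp (fun a => qc p (a + v ^ 2))]
  simp only [add_mul, one_mul, Finset.sum_add_distrib]
  have h0 : ∑ a, qc p (a + v ^ 2) = 0 := by
    rw [← sum_qc p hp]
    exact Fintype.sum_equiv (Equiv.addRight (v ^ 2)) _ _ (fun _ => rfl)
  rw [h0, add_zero]
  have hsq : ∀ a : ZMod p, a ≠ 0 → qc p a * qc p a = 1 := fun a ha => by
    rw [qc_apply, ← sq]; exact_mod_cast quadraticChar_sq_one ha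
  split_ifs with hv
  · subst hv
    have h1 : ∀ a : ZMod p, qc p a * qc p (a + 0 ^ 2) = 1 - if a = 0 then 1 else 0 := by
      intro a
      rw [zero_pow two_ne_zero, add_zero]
      split_ifs with ha
      · rw [ha, MulChar.map_zero]; simp
      · rw [hsq a ha, sub_zero]
    simp only [h1, Finset.sum_sub_distrib, Finset.sum_ite_eq', Finset.mem_univ, if_true]
    simp [ZMod.card]
  · have hc : v ^ 2 ≠ 0 := pow_ne_zero _ hv
    have hinv : (qc p)⁻¹ = qc p := ((quadraticChar_isQuadratic _).comp _).inv
    have hJ := jacobiSum_nontrivial_inv (qc_ne_one p hp)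
    rw [hinv] at hJ
    have h1 : ∑ a, qc p a * qc p (a + v ^ 2) = qc p (-1) * jacobiSum (qc p) (qc p) := by
      rw [jacobiSum, Finset.mul_sum]
      symm
      refine Fintype.sum_equiv (Equiv.mulLeft₀ (-(v ^ 2)) (neg_ne_zero.2 hc)) _ _ fun b => ?_
      rw [Equiv.mulLeft₀_apply, show -(v ^ 2) * b + v ^ 2 = v ^ 2 * (1 - b) by ring,
        show (fun x => -(v ^ 2) * x) b = -1 * (v ^ 2) * b by ring, map_mul, map_mul, map_mul]
      linear_combination (-qc p (-1) * qc p b * qc p (1 - b)) * hsq _ hc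
    rw [h1, hJ, zero_sub, mul_neg, hsq _ (neg_ne_zero.2 one_ne_zero)]

end Prime

/-- The Gauss sum `∑ (y/N) e(my/N)` of the Jacobi symbol modulo `N`. -/
def jGauss (m : ℤ) (N : ℕ) : ℂ :=
  ∑ y ∈ Finset.range N, (jacobiSym y N : ℂ) * ec (m * y / N)

/-- The Gauss sum `∑ (N(z)/n) e(Im z / n)` over `z` in `ℤ[i]/(n)`, for a rational integer `n`. -/
def nGauss (n : ℕ) : ℂ :=
  ∑ u ∈ Finset.range n, ∑ v ∈ Finset.range n,
    (jacobiSym ((u : ℤ) ^ 2 + (v : ℤ) ^ 2) n : ℂ) * ec (v / n)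

lemma jGauss_prime (p : ℕ) (hpp : p.Prime) (hp4 : p % 4 = 1) (m : ℤ) :
    jGauss m p = jacobiSym m p * (Real.sqrt p : ℝ) := by
  have : Fact p.Prime := ⟨hpp⟩
  have hp : p ≠ 2 := by rintro rfl; omega
  rw [jacobi_eq_qc, ← gaussSum_qc p hp hp4, ← gaussSum_qc_mulShift p hp, gaussSum,
    ← sum_range_eq_zmod, jGauss]
  refine Finset.sum_congr rfl fun k _ => ?_
  have := ec_eq_stdAddChar p (m * k)
  push_cast at this
  rw [AddChar.mulShift_apply, this, jacobi_eq_qc]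
  simp

lemma nGauss_prime (p : ℕ) (hpp : p.Prime) (hp : p ≠ 2) : nGauss p = p := by
  have : Fact p.Prime := ⟨hpp⟩
  have h : nGauss p = ∑ u : ZMod p, ∑ v : ZMod p, qc p (u ^ 2 + v ^ 2) * ZMod.stdAddChar v := by
    rw [← sum_range_eq_zmod, nGauss]
    refine Finset.sum_congr rfl fun u _ => ?_
    rw [← sum_range_eq_zmod p (fun v => qc p ((u : ZMod p) ^ 2 + v ^ 2) * ZMod.stdAddChar v)]
    refine Finset.sum_congr rfl fun v _ => ?_
    have := ec_eq_stdAddChar p (v : ℤ)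
    push_cast at this
    rw [this, jacobi_eq_qc]
    simp
  rw [h, Finset.sum_comm]
  simp only [← Finset.sum_mul, sum_qc_sq_add p hp, sub_mul, one_mul, Finset.sum_sub_distrib,
    sum_stdAddChar p, ite_mul, zero_mul, Finset.sum_ite_eq', Finset.mem_univ, if_true]
  simp

lemma jacobi_congr {a b : ℤ} {n : ℕ} (h : (n : ℤ) ∣ a - b) : jacobiSym a n = jacobiSym b n :=
  jacobiSym.mod_left' (Int.modEq_iff_dvd.2 h).symm

/-- The factor `(N/M)(M/N)` is trivial by reciprocity when `M ≡ 1 (mod 4)`. -/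
lemma jGauss_mul (M N : ℕ) (hM : 0 < M) (hN : 0 < N) (hMN : M.Coprime N) (m : ℤ) :
    jGauss m (M * N) = jacobiSym N M * jacobiSym M N * (jGauss m M * jGauss m N) := by
  have hMR : (M : ℝ) ≠ 0 := by positivity
  have hNR : (N : ℝ) ≠ 0 := by positivity
  have h := crt_sum M N hM hN hMN
    (fun y => (jacobiSym y (M * N) : ℂ) * ec (m * y / (M * N : ℕ))) ?_
  · simp only [Int.cast_natCast] at h
    rw [jGauss, h, jGauss, jGauss, Finset.sum_mul_sum, Finset.mul_sum]
    refine Finset.sum_congr rfl fun a _ => ?_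
    rw [Finset.mul_sum]
    refine Finset.sum_congr rfl fun b _ => ?_
    rw [jacobiSym.mul_right' _ hM.ne' hN.ne',
      jacobi_congr (n := M) (b := N * a) ⟨b, by ring⟩,
      jacobi_congr (n := N) (b := M * b) ⟨a, by ring⟩, jacobiSym.mul_left, jacobiSym.mul_left]
    have : (m * ((N * a + M * b : ℤ) : ℝ) / (M * N : ℕ) : ℝ) = m * a / M + m * b / N := by
      push_cast; field_simp
    rw [this, ec_add]
    push_cast
    ring
  · intro x k
    have h1 : (m * ((x + M * N * k : ℤ) : ℝ) / (M * N : ℕ) : ℝ) =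
        m * x / (M * N : ℕ) + (m * k : ℤ) := by
      push_cast; field_simp
    rw [h1, ec_add_int, jacobi_congr (b := x) ⟨k, by push_cast; ring⟩]

lemma nGauss_mul (M N : ℕ) (hM : 0 < M) (hN : 0 < N) (hMN : M.Coprime N) :
    nGauss (M * N) = nGauss M * nGauss N := by
  have hMR : (M : ℝ) ≠ 0 := by positivity
  have hNR : (N : ℝ) ≠ 0 := by positivity
  have hper : ∀ x y k l : ℤ, (jacobiSym ((x + M * N * k) ^ 2 + (y + M * N * l) ^ 2) (M * N) : ℂ) =
      jacobiSym (x ^ 2 + y ^ 2) (M * N) := by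
    intro x y k l
    rw [jacobi_congr (b := x ^ 2 + y ^ 2)
      ⟨2 * x * k + M * N * k ^ 2 + 2 * y * l + M * N * l ^ 2, by push_cast; ring⟩]
  have hu := crt_sum M N hM hN hMN (fun u => ∑ v ∈ Finset.range (M * N),
    (jacobiSym (u ^ 2 + (v : ℤ) ^ 2) (M * N) : ℂ) * ec (v / (M * N : ℕ))) ?_
  · rw [nGauss, hu]
    have hv : ∀ u : ℤ, _ := fun u => crt_sum M N hM hN hMN (fun v =>
      (jacobiSym (u ^ 2 + v ^ 2) (M * N) : ℂ) * ec (v / (M * N : ℕ))) ?_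
    · simp only [Int.cast_natCast] at hv
      simp only [hv]
      rw [nGauss, nGauss, Finset.sum_mul_sum]
      refine Finset.sum_congr rfl fun a _ => ?_
      refine Finset.sum_congr rfl fun b _ => ?_
      rw [Finset.sum_mul_sum]
      refine Finset.sum_congr rfl fun c _ => ?_
      refine Finset.sum_congr rfl fun d _ => ?_
      have hsq : ∀ {x : ℕ} {y : ℕ}, x.Coprime y → jacobiSym ((x : ℤ) ^ 2) y = 1 := fun h =>
        jacobiSym.sq_one' (by rw [Int.gcd_natCast_natCast]; exact h)
      rw [jacobiSym.mul_right' _ hM.ne' hN.ne',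
        jacobi_congr (n := M) (b := N ^ 2 * (a ^ 2 + c ^ 2))
          ⟨2 * N * a * b + M * b ^ 2 + 2 * N * c * d + M * d ^ 2, by ring⟩,
        jacobi_congr (n := N) (b := M ^ 2 * (b ^ 2 + d ^ 2))
          ⟨2 * M * a * b + N * a ^ 2 + 2 * M * c * d + N * c ^ 2, by ring⟩,
        jacobiSym.mul_left, jacobiSym.mul_left, hsq hMN, hsq hMN.symm]
      have : (((N * c + M * d : ℤ) : ℝ) / (M * N : ℕ) : ℝ) = c / M + d / N := by
        push_cast; field_simp
      rw [this, ec_add]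
      push_cast
      ring
    · intro x k
      have h1 : (((x + M * N * k : ℤ) : ℝ) / (M * N : ℕ) : ℝ) = x / (M * N : ℕ) + (k : ℤ) := by
        push_cast; field_simp
      have h2 := hper u x 0 k
      rw [mul_zero, add_zero] at h2
      rw [h1, ec_add_int, h2]
  · intro x k
    refine Finset.sum_congr rfl fun v _ => ?_
    have h2 := hper x v k 0
    rw [mul_zero, add_zero] at h2
    rw [h2]

lemma jGauss_eq (N : ℕ) (hN : Squarefree N) (h4 : ∀ p, p.Prime → p ∣ N → p % 4 = 1) (m : ℤ) :
    jGauss m N = jacobiSym m N * (Real.sqrt N : ℝ) := by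
  induction N using induction_on_primes with
  | zero => exact absurd hN not_squarefree_zero
  | one => simp [jGauss, ec]
  | prime_mul p N hp ih =>
    have hco : p.Coprime N := Nat.coprime_of_squarefree_mul hN
    have hN0 : 0 < N := Nat.pos_of_ne_zero (by rintro rfl; simp at hN)
    have hp4 := h4 p hp (dvd_mul_right _ _)
    have hNodd : Odd N := by
      rw [← Nat.not_even_iff_odd, even_iff_two_dvd]
      intro h
      have := h4 2 Nat.prime_two (h.mul_left _)
      omega
    rw [jGauss_mul p N hp.pos hN0 hco, jGauss_prime p hp hp4,
      ih (hN.of_mul_right) (fun q hq hd => h4 q hq (hd.mul_left _)),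
      jacobiSym.quadratic_reciprocity_one_mod_four hp4 hNodd,
      jacobiSym.mul_right' _ hp.ne_zero hN0.ne', Nat.cast_mul, Real.sqrt_mul (by positivity)]
    have h1 : (jacobiSym N p : ℂ) * jacobiSym N p = 1 := by
      have := jacobiSym.sq_one (a := N) (b := p) (by rw [Int.gcd_natCast_natCast]; exact hco.symm)
      rw [← sq]; exact_mod_cast this
    push_cast
    linear_combination ((jacobiSym m p : ℂ) * (Real.sqrt p : ℝ) * ((jacobiSym m N : ℂ)
      * (Real.sqrt N : ℝ))) * h1

lemma nGauss_eq (n : ℕ) (hn : Squarefree n) (h2 : Odd n) : nGauss n = n := by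
  induction n using induction_on_primes with
  | zero => exact absurd hn not_squarefree_zero
  | one => simp [nGauss, ec]
  | prime_mul p n hp ih =>
    have hco : p.Coprime n := Nat.coprime_of_squarefree_mul hn
    have hn0 : 0 < n := Nat.pos_of_ne_zero (by rintro rfl; simp at hn)
    rw [Nat.odd_mul] at h2
    rw [nGauss_mul p n hp.pos hn0 hco, nGauss_prime p hp (by rintro rfl; exact absurd h2.1 (by decide)),
      ih hn.of_mul_right h2.2, Nat.cast_mul]

/-! ### Residue symbols in `ℤ[i]` -/

lemma gnorm_cast (z : GaussianInt) : (gnorm z : ℤ) = z.norm := GaussianInt.abs_natCast_norm z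

lemma norm_eq (z : GaussianInt) : z.norm = z.re ^ 2 + z.im ^ 2 := by
  rw [Zsqrtd.norm_def]; ring

lemma gnorm_mul (a b : GaussianInt) : gnorm (a * b) = gnorm a * gnorm b := by
  unfold gnorm; rw [Zsqrtd.norm_mul, Int.natAbs_mul]

lemma gnorm_star (a : GaussianInt) : gnorm (star a) = gnorm a := by
  unfold gnorm; rw [Zsqrtd.norm_conj]

lemma gnorm_isUnit {a : GaussianInt} : gnorm a = 1 ↔ IsUnit a := Zsqrtd.norm_eq_one_iff

lemma gnorm_dvd {a b : GaussianInt} (h : a ∣ b) : gnorm a ∣ gnorm b := by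
  obtain ⟨c, rfl⟩ := h; exact ⟨_, gnorm_mul a c⟩

lemma gnorm_intCast (m : ℤ) : gnorm (m : GaussianInt) = m.natAbs ^ 2 := by
  unfold gnorm; rw [norm_eq]; simp [Int.natAbs_pow]

lemma gnorm_natCast (m : ℕ) : gnorm (m : GaussianInt) = m ^ 2 := by
  simpa using gnorm_intCast m

lemma gnorm_eq_mul_star (z : GaussianInt) : (gnorm z : GaussianInt) = z * star z := by
  rw [← Zsqrtd.norm_eq_mul_conj, ← gnorm_cast]; simp

lemma star_dvd_star {a b : GaussianInt} (h : a ∣ b) : star a ∣ star b := by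
  obtain ⟨c, rfl⟩ := h; exact ⟨star c, by rw [star_mul, mul_comm]⟩

lemma gnorm_mod_four {z : GaussianInt} (h : Odd (gnorm z)) : gnorm z % 4 = 1 := by
  have h1 := gnorm_cast z
  rw [norm_eq] at h1
  rcases Int.even_or_odd' z.re with ⟨k, hk | hk⟩ <;> rcases Int.even_or_odd' z.im with ⟨l, hl | hl⟩ <;>
    rw [hk, hl] at h1 <;> ring_nf at h1 <;> rw [Nat.odd_iff] at h <;> omega

lemma not_dvd_of_gnorm {π z : GaussianInt} (hπ : ¬IsUnit π) (ho : Odd (gnorm π))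
    (hz : gnorm z ∣ 4) : ¬π ∣ z := by
  intro h
  have h1 : gnorm π ∣ 2 ^ 2 := (gnorm_dvd h).trans hz
  have h2 : (gnorm π).Coprime (2 ^ 2) := (Nat.coprime_two_right.2 ho).pow_right 2
  exact hπ (gnorm_isUnit.1 (h2.eq_one_of_dvd h1))

lemma isUnit_cases {u : GaussianInt} (hu : IsUnit u) : u = 1 ∨ u = -1 ∨ u = gi ∨ u = -gi := by
  have h : u.norm = 1 := by rw [← gnorm_cast, gnorm_isUnit.2 hu]; rfl
  rw [norm_eq] at h
  have h1 : u.re ^ 2 ≤ 1 := by nlinarith [sq_nonneg u.im]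
  have h2 : u.im ^ 2 ≤ 1 := by nlinarith [sq_nonneg u.re]
  have h1' : -1 ≤ u.re ∧ u.re ≤ 1 := abs_le.1 (by rw [← sq_le_one_iff_abs_le_one]; exact h1)
  have h2' : -1 ≤ u.im ∧ u.im ≤ 1 := abs_le.1 (by rw [← sq_le_one_iff_abs_le_one]; exact h2)
  obtain ⟨x, y⟩ := u
  simp only at h h1' h2'
  obtain ⟨h3, h4⟩ := h1'
  obtain ⟨h5, h6⟩ := h2'
  interval_cases x <;> interval_cases y <;> simp_all [gi, Zsqrtd.ext_iff]

open scoped Classical in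
lemma quarticSymbolPrime_congr {π π' : GaussianInt} (h : Associated π π') (a : GaussianInt) :
    quarticSymbolPrime a π = quarticSymbolPrime a π' := by
  have h1 : gnorm π = gnorm π' := Nat.dvd_antisymm (gnorm_dvd h.dvd) (gnorm_dvd h.symm.dvd)
  have key : ∀ P Q : GaussianInt → Prop, P = Q →
      (if h : ∃ u, P u then h.choose else 0) = (if h : ∃ u, Q u then h.choose else 0) := by
    rintro P _ rfl; rfl
  exact key _ _ (funext fun u => by rw [h1, h.dvd_iff_dvd_left])

lemma quarticSymbol_unit {n : GaussianInt} (hn : IsUnit n) (a : GaussianInt) :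
    quarticSymbol a n = 1 := by
  unfold quarticSymbol
  rw [UniqueFactorizationMonoid.factors_of_isUnit hn]; rfl

lemma quarticSymbol_mul {m n : GaussianInt} (hm : m ≠ 0) (hn : n ≠ 0) (a : GaussianInt) :
    quarticSymbol a (m * n) = quarticSymbol a m * quarticSymbol a n := by
  unfold quarticSymbol
  rw [← Multiset.prod_add, ← Multiset.map_add]
  have h : ∀ {s t : Multiset GaussianInt}, Multiset.Rel Associated s t →
      (s.map fun π => quarticSymbolPrime a π) = t.map fun π => quarticSymbolPrime a π := by
    intro s t h
    induction h with
    | zero => rfl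
    | cons h1 _ ih => rw [Multiset.map_cons, Multiset.map_cons, ih, quarticSymbolPrime_congr h1]
  rw [h (UniqueFactorizationMonoid.factors_mul hm hn)]

lemma quarticSymbol_prime {π : GaussianInt} (hπ : Prime π) (a : GaussianInt) :
    quarticSymbol a π = quarticSymbolPrime a π := by
  obtain ⟨p, hp, hf⟩ := prime_factors_irreducible hπ.irreducible
    ⟨fun b hb => UniqueFactorizationMonoid.prime_of_factor b hb,
      UniqueFactorizationMonoid.factors_prod hπ.ne_zero⟩
  unfold quarticSymbol
  rw [hf, Multiset.map_singleton, Multiset.prod_singleton, quarticSymbolPrime_congr hp]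

lemma quadSymbol_mul {m n : GaussianInt} (hm : m ≠ 0) (hn : n ≠ 0) (a : GaussianInt) :
    quadSymbol a (m * n) = quadSymbol a m * quadSymbol a n := by
  unfold quadSymbol; rw [quarticSymbol_mul hm hn, mul_pow]

lemma gi_sq : gi ^ 2 = -1 := by rw [sq]; rfl

lemma gi_isUnit : IsUnit gi := gnorm_isUnit.1 rfl

/-- Euler's criterion: the square of the quartic symbol is the residue of `x^((N(π)-1)/2)`. -/
lemma sq_eq_of_dvd {π x : GaussianInt} (hπ : Prime π) (ho : Odd (gnorm π)) (ε : ℤ)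
    (hε : ε = 0 ∨ ε = 1 ∨ ε = -1) (h : π ∣ x ^ ((gnorm π - 1) / 2) - (ε : GaussianInt)) :
    quarticSymbolPrime x π ^ 2 = ε := by
  have h4 := gnorm_mod_four ho
  set k := (gnorm π - 1) / 4 with hk
  have hk2 : (gnorm π - 1) / 2 = k * 2 := by omega
  rw [hk2, pow_mul] at h
  set t := x ^ k with ht
  have hdvdunit : ∀ u : GaussianInt, IsUnit u → ¬π ∣ u := fun u hu hd =>
    hπ.not_isUnit (isUnit_of_dvd_unit hd hu)
  unfold quarticSymbolPrime
  by_cases hε0 : ε = 0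
  · subst hε0
    rw [dif_neg]
    · simp
    · rintro ⟨u, hu, hd⟩
      have h1 : π ∣ t := hπ.dvd_of_dvd_pow (n := 2) (by simpa using h)
      exact hdvdunit u hu ((dvd_sub_right h1).1 hd)
  · have hex : ∃ u : GaussianInt, IsUnit u ∧ π ∣ t - u := by
      rcases hε with h0 | h1 | h1
      · exact absurd h0 hε0
      · subst h1
        have : π ∣ (t - 1) * (t - -1) := by convert h using 1; push_cast; ring
        rcases hπ.dvd_or_dvd this with h2 | h2
        · exact ⟨1, isUnit_one, h2⟩
        · exact ⟨-1, isUnit_one.neg, h2⟩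
      · subst h1
        have : π ∣ (t - gi) * (t - -gi) := by
          convert h using 1; push_cast; linear_combination (-1 : GaussianInt) * gi_sq
        rcases hπ.dvd_or_dvd this with h2 | h2
        · exact ⟨gi, gi_isUnit, h2⟩
        · exact ⟨-gi, gi_isUnit.neg, h2⟩
    rw [dif_pos hex]
    obtain ⟨hu, hd⟩ := hex.choose_spec
    set u := hex.choose
    have h2 : π ∣ u ^ 2 - (ε : GaussianInt) := by
      have h3 : π ∣ t ^ 2 - u ^ 2 := hd.trans (sub_dvd_pow_sub_pow t u 2)
      have := dvd_sub h h3
      convert this using 1; ring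
    have hu2 : u ^ 2 = 1 ∨ u ^ 2 = -1 := by
      rcases isUnit_cases hu with h | h | h | h <;> rw [h] <;> simp [gi_sq]
    have hn2 : ¬π ∣ (2 : GaussianInt) := not_dvd_of_gnorm hπ.not_isUnit ho (by decide)
    have hn2' : ¬π ∣ (-2 : GaussianInt) := by rwa [dvd_neg]
    rcases hε with h0 | h1 | h1
    · exact absurd h0 hε0
    · subst h1
      rcases hu2 with h3 | h3
      · rw [h3]; simp
      · rw [h3] at h2; exact absurd (by convert h2 using 1; push_cast; ring) hn2'
    · subst h1
      rcases hu2 with h3 | h3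
      · rw [h3] at h2; exact absurd (by convert h2 using 1; push_cast; ring) hn2
      · rw [h3]; simp

lemma dvd_euler (p : ℕ) [Fact p.Prime] (t : ℤ) : (p : ℤ) ∣ t ^ (p / 2) - jacobiSym t p := by
  rw [← jacobiSym.legendreSym.to_jacobiSym, ← ZMod.intCast_zmod_eq_zero_iff_dvd]
  push_cast
  rw [legendreSym.eq_pow, sub_self]

lemma int_dvd_cast {a b : ℤ} (h : a ∣ b) : (a : GaussianInt) ∣ (b : GaussianInt) :=
  (Zsqrtd.intCast_dvd_intCast a b).2 h

lemma dvd_gnorm (z : GaussianInt) : z ∣ (gnorm z : GaussianInt) :=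
  ⟨star z, gnorm_eq_mul_star z⟩

/-- At a prime of degree one the quadratic symbol is a Legendre symbol of `ℚ`. -/
lemma quadSymbol_degree_one {π x : GaussianInt} (hπ : Prime π) (p : ℕ) (hp : p.Prime)
    (hg : gnorm π = p) (ho : Odd p) (t : ℤ) (h : π ∣ x - (t : GaussianInt)) :
    quadSymbol x π = (jacobiSym t p : ℤ) := by
  have : Fact p.Prime := ⟨hp⟩
  have hπp : π ∣ (p : GaussianInt) := hg ▸ dvd_gnorm π
  rw [quadSymbol, quarticSymbol_prime hπ]
  refine sq_eq_of_dvd hπ (hg ▸ ho) _ (jacobiSym.trichotomy t p) ?_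
  have hk : (gnorm π - 1) / 2 = p / 2 := by
    obtain ⟨k, hk⟩ := ho
    omega
  rw [hk]
  have h1 : π ∣ x ^ (p / 2) - (t : GaussianInt) ^ (p / 2) := h.trans (sub_dvd_pow_sub_pow _ _ _)
  have h2 : π ∣ (t : GaussianInt) ^ (p / 2) - (jacobiSym t p : ℤ) := by
    have := int_dvd_cast (dvd_euler p t)
    push_cast at this
    exact hπp.trans this
  have := dvd_add h1 h2
  convert this using 1; ring

lemma gi_pow_four : gi ^ 4 = 1 := by rw [show 4 = 2 * 2 by rfl, pow_mul, gi_sq]; ring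

/-- At an inert prime `p` the Frobenius is complex conjugation, so `x^(p+1) ≡ N(x)`, and the
quadratic symbol is the Legendre symbol of the norm. -/
lemma quadSymbol_inert (p : ℕ) (hp : p.Prime) (hp4 : p % 4 = 3) (x : GaussianInt) :
    quadSymbol x (p : GaussianInt) = (jacobiSym x.norm p : ℤ) := by
  have : Fact p.Prime := ⟨hp⟩
  have hπ : Prime (p : GaussianInt) := GaussianInt.prime_of_nat_prime_of_mod_four_eq_three p hp4
  have hg : gnorm (p : GaussianInt) = p ^ 2 := gnorm_natCast p
  have hpo : Odd p := Nat.odd_iff.2 (by omega)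
  rw [quadSymbol, quarticSymbol_prime hπ]
  refine sq_eq_of_dvd hπ (hg ▸ hpo.pow) _ (jacobiSym.trichotomy _ p) ?_
  have hk : (gnorm (p : GaussianInt) - 1) / 2 = (p + 1) * (p / 2) := by
    rw [hg]
    obtain ⟨k, rfl⟩ := hpo
    rw [show (2 * k + 1) ^ 2 = 2 * (2 * k * k + 2 * k) + 1 by ring,
      show (2 * k + 1) / 2 = k by omega, Nat.add_sub_cancel, Nat.mul_div_cancel_left _ two_pos]
    ring
  have hint : ∀ a : ℤ, (p : GaussianInt) ∣ (a : GaussianInt) ^ p - a := by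
    intro a
    have h : (p : ℤ) ∣ a ^ p - a := by
      rw [← ZMod.intCast_zmod_eq_zero_iff_dvd]; push_cast; rw [ZMod.pow_card, sub_self]
    simpa using int_dvd_cast h
  have hx : x = (x.re : GaussianInt) + gi * (x.im : GaussianInt) := by
    ext <;> simp [gi]
  have hs : star x = (x.re : GaussianInt) - gi * (x.im : GaussianInt) := by
    ext <;> simp [gi]
  have hgi : gi ^ p = -gi := by
    rw [← Nat.div_add_mod p 4, hp4, pow_add, pow_mul, gi_pow_four, one_pow, one_mul,
      show 3 = 2 + 1 by rfl, pow_succ, gi_sq]; ring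
  have hfrob : (p : GaussianInt) ∣ x ^ p - star x := by
    obtain ⟨r, hr⟩ := exists_add_pow_prime_eq hp (x.re : GaussianInt) (gi * (x.im : GaussianInt))
    rw [← hx, mul_pow, hgi] at hr
    obtain ⟨r1, h1⟩ := hint x.re
    obtain ⟨r2, h2⟩ := hint x.im
    refine ⟨r1 - gi * r2 + x.re * (gi * x.im) * r, ?_⟩
    rw [hr, hs]
    linear_combination h1 - gi * h2
  have h1 : (p : GaussianInt) ∣ x ^ (p + 1) - (x.norm : GaussianInt) := by
    rw [Zsqrtd.norm_eq_mul_conj]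
    convert hfrob.mul_left x using 1
    ring
  rw [hk, pow_mul]
  have h2 := h1.trans (sub_dvd_pow_sub_pow _ _ (p / 2))
  have h3 : (p : GaussianInt) ∣ (x.norm : GaussianInt) ^ (p / 2) - (jacobiSym x.norm p : ℤ) := by
    simpa using int_dvd_cast (dvd_euler p x.norm)
  have := dvd_add h2 h3
  convert this using 1; ring

lemma exists_prime_dvd_natCast {π : GaussianInt} (hπ : Prime π) (m : ℕ) (hm : m ≠ 0)
    (h : π ∣ (m : GaussianInt)) : ∃ p : ℕ, p.Prime ∧ π ∣ (p : GaussianInt) := by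
  induction m using induction_on_primes with
  | zero => exact absurd rfl hm
  | one => exact absurd (isUnit_of_dvd_one (by simpa using h)) hπ.not_isUnit
  | prime_mul p m hp ih =>
    rw [Nat.cast_mul] at h
    rcases hπ.dvd_or_dvd h with h | h
    · exact ⟨p, hp, h⟩
    · exact ih (by rintro rfl; simp at hm) h

lemma gnorm_ne_zero {z : GaussianInt} (hz : z ≠ 0) : gnorm z ≠ 0 := by
  unfold gnorm; rw [Ne, Int.natAbs_eq_zero, GaussianInt.norm_eq_zero]; exact hz

/-- A prime of `ℤ[i]` has degree one, or is divisible by a rational prime. -/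
lemma prime_cases {π : GaussianInt} (hπ : Prime π) :
    (∃ p : ℕ, p.Prime ∧ gnorm π = p) ∨ ∃ p : ℕ, p.Prime ∧ (p : GaussianInt) ∣ π := by
  obtain ⟨p, hp, w, hw⟩ := exists_prime_dvd_natCast hπ _ (gnorm_ne_zero hπ.ne_zero) (dvd_gnorm π)
  have h1 : p ^ 2 = gnorm π * gnorm w := by rw [← gnorm_mul, ← hw, gnorm_natCast]
  obtain ⟨k, hk, hg⟩ := (Nat.dvd_prime_pow hp).1 ⟨_, h1⟩
  interval_cases k
  · exact absurd (gnorm_isUnit.1 (by simpa using hg)) hπ.not_isUnit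
  · exact Or.inl ⟨p, hp, by simpa using hg⟩
  · right
    rw [hg] at h1
    have hw1 : gnorm w = 1 := by
      have : 0 < p ^ 2 := pow_pos hp.pos 2
      exact Nat.eq_of_mul_eq_mul_left this (by rw [← h1, mul_one])
    exact ⟨p, hp, by
      rw [hw]; exact (associated_mul_unit_right π w (gnorm_isUnit.1 hw1)).symm.dvd⟩

lemma odd_gnorm_of_mul {a b : GaussianInt} (h : Odd (gnorm (a * b))) :
    Odd (gnorm a) ∧ Odd (gnorm b) := by rwa [gnorm_mul, Nat.odd_mul] at h

/-- If no rational prime divides `d`, then `ℤ → ℤ[i]/(d)` is onto and the quadratic symbol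
modulo `d` is the Jacobi symbol modulo `N(d)`. -/
lemma quadSymbol_primitive (d : GaussianInt) (hd : d ≠ 0) (ho : Odd (gnorm d))
    (hprim : ∀ p : ℕ, p.Prime → ¬(p : GaussianInt) ∣ d) (x : GaussianInt) (t : ℤ)
    (h : d ∣ x - (t : GaussianInt)) : quadSymbol x d = (jacobiSym t (gnorm d) : ℤ) := by
  induction d using UniqueFactorizationMonoid.induction_on_prime with
  | h₁ => exact absurd rfl hd
  | h₂ u hu => rw [quadSymbol, quarticSymbol_unit hu, gnorm_isUnit.2 hu]; simp
  | h₃ d π hd0 hπ ih =>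
    obtain ⟨ho1, ho2⟩ := odd_gnorm_of_mul ho
    rcases prime_cases hπ with ⟨p, hp, hg⟩ | ⟨p, hp, hdv⟩
    · rw [quadSymbol_mul hπ.ne_zero hd0, gnorm_mul,
        ih hd0 ho2 (fun q hq hqd => hprim q hq (hqd.mul_left _)) ((dvd_mul_left _ _).trans h),
        quadSymbol_degree_one hπ p hp hg (hg ▸ ho1) t ((dvd_mul_right _ _).trans h), hg,
        jacobiSym.mul_right' _ hp.ne_zero (gnorm_ne_zero hd0)]
      push_cast; rfl
    · exact absurd (hdv.mul_right _) (hprim p hp)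

/-- For primitive `d`, the kernel of `ℤ → ℤ[i]/(d)` is generated by `N(d)`. -/
lemma dvd_intCast_of_coprime {d : GaussianInt} (hd : IsCoprime d.re d.im) {m : ℤ}
    (h : d ∣ (m : GaussianInt)) : (gnorm d : ℤ) ∣ m := by
  obtain ⟨w, hw⟩ := h
  have h1 := congrArg (fun z => star d * z) hw
  simp only [← mul_assoc] at h1
  rw [mul_comm (star d) d, ← gnorm_eq_mul_star] at h1
  have h2 := congrArg Zsqrtd.re h1
  have h3 := congrArg Zsqrtd.im h1
  simp at h2 h3
  obtain ⟨u, v, huv⟩ := hd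
  refine ⟨u * w.re - v * w.im, ?_⟩
  linear_combination -m * huv + u * h2 - v * h3

/-- For primitive `d`, the map `ℤ → ℤ[i]/(d)` is onto. -/
lemma exists_int_residue {d : GaussianInt} (hd : IsCoprime d.re d.im) (x : GaussianInt) :
    ∃ t : ℤ, d ∣ x - (t : GaussianInt) := by
  obtain ⟨u, v, huv⟩ := hd
  -- `d * (v + u i) = s + i` for the integer `s = v re d - u im d`
  refine ⟨x.re - x.im * (v * d.re - u * d.im), ⟨v, u⟩ * (x.im : GaussianInt), ?_⟩
  ext
  · simp; ring
  · simp; linear_combination -x.im * huv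

lemma prime_of_gnorm {π : GaussianInt} (h : (gnorm π).Prime) : Prime π := by
  rw [← irreducible_iff_prime]
  refine ⟨fun hu => h.one_lt.ne' (gnorm_isUnit.2 hu), fun a b hab => ?_⟩
  rw [hab, gnorm_mul, Nat.prime_mul_iff] at h
  rcases h with h | h
  · exact Or.inr (gnorm_isUnit.1 h.2)
  · exact Or.inl (gnorm_isUnit.1 h.2)

lemma coprime_of_prime_norm {z : GaussianInt} (p : ℕ) (hp : p.Prime) (h : gnorm z = p) :
    IsCoprime z.re z.im := by
  rw [Int.isCoprime_iff_gcd_eq_one]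
  have h1 : ((Int.gcd z.re z.im : ℤ) : GaussianInt) ∣ z :=
    (Zsqrtd.intCast_dvd _ _).2 ⟨Int.gcd_dvd_left .., Int.gcd_dvd_right ..⟩
  have h2 := gnorm_dvd h1
  rw [gnorm_intCast, h, Int.natAbs_natCast] at h2
  by_contra hne
  have h3 : Int.gcd z.re z.im ∣ p := (dvd_pow_self _ two_ne_zero).trans h2
  rcases (Nat.dvd_prime hp).1 h3 with h4 | h4
  · exact hne h4
  · rw [h4] at h2
    have := Nat.le_of_dvd hp.pos h2
    nlinarith [hp.two_le]

/-- Modulo a rational integer `n` the quadratic symbol is the Jacobi symbol of the norm. -/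
lemma quadSymbol_natCast (n : ℕ) (hn : Odd n) (x : GaussianInt) :
    quadSymbol x (n : GaussianInt) = (jacobiSym x.norm n : ℤ) := by
  induction n using induction_on_primes with
  | zero => exact absurd hn (by decide)
  | one => rw [quadSymbol, quarticSymbol_unit (by simp)]; simp
  | prime_mul p n hp ih =>
    rw [Nat.odd_mul] at hn
    have hn0 : n ≠ 0 := by rintro rfl; exact absurd hn.2 (by decide)
    have : Fact p.Prime := ⟨hp⟩
    rw [Nat.cast_mul, quadSymbol_mul (by exact_mod_cast hp.ne_zero) (by exact_mod_cast hn0),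
      ih hn.2, jacobiSym.mul_right' _ hp.ne_zero hn0]
    have hcase : quadSymbol x (p : GaussianInt) = (jacobiSym x.norm p : ℤ) := by
      by_cases hp4 : p % 4 = 3
      · exact quadSymbol_inert p hp hp4 x
      · obtain ⟨a, b, hab⟩ := Nat.Prime.sq_add_sq hp4
        set π : GaussianInt := ⟨a, b⟩ with hπdef
        have hg : gnorm π = p := by
          have : (gnorm π : ℤ) = p := by rw [gnorm_cast, norm_eq, ← hab]; push_cast; rfl
          exact_mod_cast this
        have hg' : gnorm (star π) = p := by rw [gnorm_star, hg]
        have hπ : Prime π := prime_of_gnorm (hg ▸ hp)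
        have hπ' : Prime (star π) := prime_of_gnorm (hg' ▸ hp)
        obtain ⟨t, ht⟩ := exists_int_residue (coprime_of_prime_norm p hp hg) x
        obtain ⟨t', ht'⟩ := exists_int_residue (coprime_of_prime_norm p hp hg') x
        rw [show (p : GaussianInt) = π * star π by rw [← gnorm_eq_mul_star, hg],
          quadSymbol_mul hπ.ne_zero hπ'.ne_zero, quadSymbol_degree_one hπ p hp hg hn.1 t ht,
          quadSymbol_degree_one hπ' p hp hg' hn.1 t' ht', ← Int.cast_mul, ← jacobiSym.mul_left]
        congr 1
        refine jacobiSym.mod_left' (Int.modEq_iff_dvd.2 ?_)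
        rw [← hg]
        refine dvd_intCast_of_coprime (coprime_of_prime_norm p hp hg) ?_
        have h1 := star_dvd_star ht'
        rw [star_star, star_sub, star_intCast] at h1
        push_cast
        rw [Zsqrtd.norm_eq_mul_conj]
        convert dvd_add (ht.mul_right (star x)) (h1.mul_left (t : GaussianInt)) using 1
        ring
    rw [hcase]
    push_cast; rfl

lemma quarticSymbolPrime_neg_one {π : GaussianInt} (hπ : Prime π) (ho : Odd (gnorm π)) :
    quarticSymbolPrime (-1) π = if gnorm π % 8 = 1 then 1 else -1 := by
  have h4 := gnorm_mod_four ho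
  have hval : (-1 : GaussianInt) ^ ((gnorm π - 1) / 4) = if gnorm π % 8 = 1 then 1 else -1 := by
    split_ifs with h
    · exact Even.neg_one_pow (by rw [Nat.even_iff]; omega)
    · exact Odd.neg_one_pow (by rw [Nat.odd_iff]; omega)
  rw [← hval]
  set v : GaussianInt := (-1) ^ ((gnorm π - 1) / 4) with hv
  have hvu : IsUnit v := isUnit_one.neg.pow _
  unfold quarticSymbolPrime
  have hex : ∃ u : GaussianInt, IsUnit u ∧ π ∣ v - u := ⟨v, hvu, by simp⟩
  rw [dif_pos hex]
  obtain ⟨hu, hd⟩ := hex.choose_spec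
  set u := hex.choose
  by_contra hne
  refine not_dvd_of_gnorm hπ.not_isUnit ho ?_ hd
  rcases isUnit_cases hvu with h | h | h | h <;> rcases isUnit_cases hu with h' | h' | h' | h' <;>
    rw [h, h'] at hne ⊢ <;> first | exact absurd rfl hne | decide

/-- The value `(-1)^((N(c) - 1)/4)` of the quartic symbol of `-1`, for composite `c` as well. -/
lemma quarticSymbol_neg_one (c : GaussianInt) (hc : c ≠ 0) (ho : Odd (gnorm c)) :
    quarticSymbol (-1) c = if gnorm c % 8 = 1 then 1 else -1 := by
  induction c using UniqueFactorizationMonoid.induction_on_prime with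
  | h₁ => exact absurd rfl hc
  | h₂ u hu => rw [quarticSymbol_unit hu, gnorm_isUnit.2 hu]; simp
  | h₃ d π hd0 hπ ih =>
    obtain ⟨ho1, ho2⟩ := odd_gnorm_of_mul ho
    rw [quarticSymbol_mul hπ.ne_zero hd0, quarticSymbol_prime hπ,
      quarticSymbolPrime_neg_one hπ ho1, ih hd0 ho2, gnorm_mul, Nat.mul_mod]
    have h1 := gnorm_mod_four ho1
    have h2 := gnorm_mod_four ho2
    have h1' : gnorm π % 8 = 1 ∨ gnorm π % 8 = 5 := by omega
    have h2' : gnorm d % 8 = 1 ∨ gnorm d % 8 = 5 := by omega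
    rcases h1' with h | h <;> rcases h2' with h' | h' <;> rw [h, h'] <;> norm_num

/-! ### Evaluation of the Gauss sum -/

lemma eTilde_eq (z : ℂ) : eTilde z = ec z.im := by
  have h : z / (2 * I) - conj z / (2 * I) = z.im := by
    rw [← sub_div, Complex.sub_conj]
    have := I_ne_zero
    push_cast
    field_simp
  unfold eTilde ec
  rw [h]

/-- If `c = n * d` with `n` a rational integer prime to `d` and no rational prime dividing `d`,
the elements `n * y + d * (u + v i)` with `0 ≤ y < N(d)` and `0 ≤ u, v < n` represent the
residues modulo `c`. -/
lemma tsum_quotient (n : ℕ) (hn : 0 < n) (d : GaussianInt) (hd0 : d ≠ 0)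
    (hd : IsCoprime d.re d.im) (hnd : IsCoprime (n : GaussianInt) d)
    (F : GaussianInt → ℂ) (G : ℤ → ℤ → ℤ → ℂ)
    (hFG : ∀ (z : GaussianInt) (y u v : ℤ),
      (n : GaussianInt) * d ∣ z - (n * (y : GaussianInt) + d * ⟨u, v⟩) → F z = G y u v) :
    ∑' x : GaussianInt ⧸ Ideal.span {(n : GaussianInt) * d}, F (Quotient.out x) =
      ∑ y ∈ Finset.range (gnorm d), ∑ u ∈ Finset.range n, ∑ v ∈ Finset.range n, G y u v := by
  have hN : 0 < gnorm d := Nat.pos_of_ne_zero (gnorm_ne_zero hd0)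
  have hn' : (0 : ℤ) < n := by exact_mod_cast hn
  have hN' : (0 : ℤ) < gnorm d := by exact_mod_cast hN
  set r : Fin (gnorm d) × Fin n × Fin n → GaussianInt := fun p =>
    n * ((p.1 : ℕ) : ℤ) + d * ⟨((p.2.1 : ℕ) : ℤ), ((p.2.2 : ℕ) : ℤ)⟩ with hr
  set φ : Fin (gnorm d) × Fin n × Fin n → GaussianInt ⧸ Ideal.span {(n : GaussianInt) * d} :=
    fun p => Ideal.Quotient.mk _ (r p) with hφ
  have hfin : ∀ {m : ℕ} (x y : Fin m), (m : ℤ) ∣ ((x : ℕ) : ℤ) - ((y : ℕ) : ℤ) → x = y := by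
    intro m x y h
    have h2 := Int.eq_zero_of_abs_lt_dvd h (by rw [abs_lt]; omega)
    exact Fin.ext (by omega)
  have hinj : Function.Injective φ := by
    rintro ⟨y, u, v⟩ ⟨y', u', v'⟩ h
    rw [hφ] at h
    simp only [Ideal.Quotient.eq, Ideal.mem_span_singleton, hr] at h
    have h1 : d ∣ (n : GaussianInt) * ((((y : ℕ) : ℤ) - ((y' : ℕ) : ℤ) : ℤ) : GaussianInt) := by
      have h2 := (dvd_mul_left d (n : GaussianInt)).trans h
      have h3 := dvd_sub h2 (dvd_mul_right d
        ((⟨(u : ℕ), (v : ℕ)⟩ : GaussianInt) - ⟨(u' : ℕ), (v' : ℕ)⟩))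
      convert h3 using 1
      push_cast; ring
    have hy := hfin _ _ (dvd_intCast_of_coprime hd (hnd.symm.dvd_of_dvd_mul_left h1))
    subst hy
    have h4 : (n : GaussianInt) ∣
        d * ((⟨(u : ℕ), (v : ℕ)⟩ : GaussianInt) - ⟨(u' : ℕ), (v' : ℕ)⟩) := by
      have h2 := (dvd_mul_right (n : GaussianInt) d).trans h
      convert h2 using 1
      ring
    have h5 := hnd.dvd_of_dvd_mul_left h4
    rw [← Int.cast_natCast (R := GaussianInt) n] at h5
    have h6 := (Zsqrtd.intCast_dvd (n : ℤ) _).1 h5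
    simp only [Zsqrtd.re_sub, Zsqrtd.im_sub] at h6
    rw [hfin _ _ h6.1, hfin _ _ h6.2]
  have hsurj : Function.Surjective φ := by
    intro q
    obtain ⟨x, rfl⟩ := Ideal.Quotient.mk_surjective q
    obtain ⟨α, β, h⟩ := hnd
    obtain ⟨t, ht⟩ := exists_int_residue hd (α * x)
    set w := β * x with hw
    have hred : ∀ (m : ℕ) (hm : (0 : ℤ) < m) (k : ℤ), ∃ j : Fin m, ∃ l : ℤ,
        k = ((j : ℕ) : ℤ) + m * l := by
      intro m hm k
      have h1 := Int.emod_nonneg k hm.ne'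
      have h2 := Int.emod_lt_of_pos k hm
      refine ⟨⟨(k % m).toNat, by omega⟩, k / m, ?_⟩
      simp only [Int.toNat_of_nonneg h1]
      exact (Int.emod_add_mul_ediv k m).symm
    obtain ⟨y, l, hy⟩ := hred _ hN' t
    obtain ⟨u, l1, hu⟩ := hred _ hn' w.re
    obtain ⟨v, l2, hv⟩ := hred _ hn' w.im
    refine ⟨(y, u, v), ?_⟩
    rw [hφ]
    simp only [Ideal.Quotient.eq, Ideal.mem_span_singleton, hr]
    rw [← dvd_neg, neg_sub]
    obtain ⟨k, hk⟩ := ht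
    have hw2 : w = ⟨((u : ℕ) : ℤ), ((v : ℕ) : ℤ)⟩ + n * ⟨l1, l2⟩ := by
      ext
      · rw [hu]; simp
      · rw [hv]; simp
    have hg := gnorm_eq_mul_star d
    have hy2 : (t : GaussianInt) = ((y : ℕ) : ℤ) + d * star d * (l : GaussianInt) := by
      rw [hy, ← hg]; push_cast; ring
    refine ⟨k + star d * (l : GaussianInt) + ⟨l1, l2⟩, ?_⟩
    linear_combination (-x) * h + (n : GaussianInt) * hk + (n : GaussianInt) * hy2 + d * hw2
      + d * hw
  let e := Equiv.ofBijective φ ⟨hinj, hsurj⟩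
  rw [← e.tsum_eq, tsum_fintype, Fintype.sum_prod_type]
  simp only [Fintype.sum_prod_type]
  rw [Finset.sum_range fun y : ℕ => ∑ u ∈ Finset.range n, ∑ v ∈ Finset.range n, G y u v]
  refine Finset.sum_congr rfl fun y _ => ?_
  rw [Finset.sum_range fun u : ℕ => ∑ v ∈ Finset.range n, G (y : ℕ) u v]
  refine Finset.sum_congr rfl fun u _ => ?_
  rw [Finset.sum_range fun v : ℕ => G (y : ℕ) (u : ℕ) v]
  refine Finset.sum_congr rfl fun v _ => ?_
  refine hFG _ _ _ _ ?_
  have h1 : Ideal.Quotient.mk (Ideal.span {(n : GaussianInt) * d}) (Quotient.out (e (y, u, v)))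
      = φ (y, u, v) := Ideal.Quotient.mk_out _
  rw [hφ] at h1
  simpa only [Ideal.Quotient.eq, Ideal.mem_span_singleton, hr] using h1

/-- The additive character factors because `z / (n d) ≡ y / d + (u + v i) / n` modulo `ℤ[i]`, where
`y / d` has imaginary part `-y Im(d) / N(d)`. -/
lemma eTilde_term (n : ℕ) (hn : 0 < n) (d : GaussianInt) (hd0 : d ≠ 0)
    (z : GaussianInt) (y u v : ℤ)
    (h : (n : GaussianInt) * d ∣ z - (n * (y : GaussianInt) + d * ⟨u, v⟩)) :
    eTilde (toComplex z / toComplex ((n : GaussianInt) * d)) =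
      ec ((-d.im : ℤ) * y / gnorm d) * ec (v / n) := by
  obtain ⟨k, hk⟩ := h
  have hz : z = n * (y : GaussianInt) + d * ⟨u, v⟩ + n * d * k := by linear_combination hk
  have hdc : toComplex d ≠ 0 := by rwa [Ne, toComplex_eq_zero]
  have hnc : (n : ℂ) ≠ 0 := by exact_mod_cast hn.ne'
  have hg : ((gnorm d : ℝ)) = Complex.normSq (toComplex d) := by
    rw [← intCast_real_norm, ← gnorm_cast]; simp
  have hq : toComplex z / toComplex ((n : GaussianInt) * d) =
      (y : ℂ) / toComplex d + toComplex ⟨u, v⟩ / n + toComplex k := by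
    rw [hz]
    simp only [map_add, map_mul, map_natCast, map_intCast]
    field_simp
  have him : (toComplex z / toComplex ((n : GaussianInt) * d)).im =
      ((-d.im : ℤ) * y / gnorm d + v / n : ℝ) + (k.im : ℤ) := by
    rw [hq, Complex.add_im, Complex.add_im, ← GaussianInt.intCast_im k, hg, Complex.div_natCast_im,
      im_toComplex, Complex.div_im]
    simp [← GaussianInt.intCast_im]
    ring
  rw [eTilde_eq, him, ec_add_int, ec_add]

lemma quadSymbol_term (n : ℕ) (hn : Odd n) (d : GaussianInt) (hd0 : d ≠ 0)
    (ho : Odd (gnorm d)) (hprim : ∀ p : ℕ, p.Prime → ¬(p : GaussianInt) ∣ d)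
    (z : GaussianInt) (y u v : ℤ)
    (h : (n : GaussianInt) * d ∣ z - (n * (y : GaussianInt) + d * ⟨u, v⟩)) :
    quadSymbol z ((n : GaussianInt) * d) =
      (jacobiSym (gnorm d) n * jacobiSym (u ^ 2 + v ^ 2) n *
        (jacobiSym n (gnorm d) * jacobiSym y (gnorm d)) : ℤ) := by
  obtain ⟨k, hk⟩ := h
  have hn0 : (n : GaussianInt) ≠ 0 := by exact_mod_cast hn.pos.ne'
  rw [quadSymbol_mul hn0 hd0, quadSymbol_natCast n hn,
    quadSymbol_primitive d hd0 ho hprim z (n * y)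
      ⟨⟨u, v⟩ + n * k, by push_cast; linear_combination hk⟩,
    jacobiSym.mul_left, ← jacobiSym.mul_left (gnorm d : ℤ), Int.cast_mul, Int.cast_mul,
    Int.cast_mul]
  congr 2
  refine jacobi_congr ?_
  set s := (y : GaussianInt) + d * k with hs
  set w := d * (⟨u, v⟩ : GaussianInt) with hw
  have hz : z = w + n * s := by rw [hs]; linear_combination hk
  have hwn : (gnorm d : ℤ) * (u ^ 2 + v ^ 2) = w.norm := by
    rw [hw, Zsqrtd.norm_mul, ← gnorm_cast d, norm_eq ⟨u, v⟩]
  rw [hwn, hz, norm_eq, norm_eq]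
  refine ⟨2 * (w.re * s.re + w.im * s.im) + n * (s.re ^ 2 + s.im ^ 2), ?_⟩
  simp
  ring

/-- The factorization of `g(n d)` into a Gauss sum over `ℤ/N(d)` and one over `ℤ[i]/(n)`. -/
lemma quadGaussSum_mul (n : ℕ) (hn : Odd n) (hsn : Squarefree n) (d : GaussianInt) (hd0 : d ≠ 0)
    (hd : IsCoprime d.re d.im) (hnd : IsCoprime (n : GaussianInt) d)
    (ho : Odd (gnorm d)) (hsd : Squarefree (gnorm d))
    (h4 : ∀ p, p.Prime → p ∣ gnorm d → p % 4 = 1)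
    (hprim : ∀ p : ℕ, p.Prime → ¬(p : GaussianInt) ∣ d) :
    quadGaussSum ((n : GaussianInt) * d) =
      (jacobiSym (gnorm d) n * jacobiSym n (gnorm d) * jacobiSym (-d.im) (gnorm d) : ℤ) *
        (n * Real.sqrt (gnorm d) : ℝ) := by
  have hJ := jGauss_eq (gnorm d) hsd h4 (-d.im)
  have hn' := nGauss_eq n hsn hn
  unfold quadGaussSum
  rw [tsum_quotient n hn.pos d hd0 hd hnd
    (fun z => toComplex (quadSymbol z ((n : GaussianInt) * d)) *
      eTilde (toComplex z / toComplex ((n : GaussianInt) * d)))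
    (fun y u v => ((jacobiSym (gnorm d) n * jacobiSym n (gnorm d) : ℤ) : ℂ) *
      ((jacobiSym y (gnorm d) * ec ((-d.im : ℤ) * y / gnorm d)) *
        (jacobiSym (u ^ 2 + v ^ 2) n * ec (v / n))))]
  · simp only [← Finset.mul_sum, ← Finset.sum_mul]
    unfold jGauss at hJ
    unfold nGauss at hn'
    push_cast at hJ hn' ⊢
    rw [hJ, hn']
    ring
  · intro z y u v h
    rw [quadSymbol_term n hn d hd0 ho hprim z y u v h, eTilde_term n hn.pos d hd0 z y u v h]
    rw [map_intCast]
    push_cast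
    ring

/-- For `4 ∣ b` and `N = a² + b²` with `a` prime to `b`, the symbol `(-b/N)` is trivial: it only
depends on `N` modulo `4|b|`, hence equals `(-b/a²) = 1`. -/
lemma jacobi_neg_im (a b : ℤ) (hab : IsCoprime a b) (ha : Odd a) (hb : 4 ∣ b) (N : ℕ)
    (hN : (N : ℤ) = a ^ 2 + b ^ 2) : jacobiSym (-b) N = 1 := by
  have hNo : Odd N := by
    have : Odd (N : ℤ) := by
      rw [hN]; exact ha.pow.add_even ((even_iff_two_dvd.2 (by omega)).pow_of_ne_zero two_ne_zero)
    exact_mod_cast this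
  have hao : Odd (a.natAbs ^ 2) := (Int.natAbs_odd.2 ha).pow
  rw [jacobiSym.mod_right (-b) hNo, Int.natAbs_neg]
  have hmod : N % (4 * b.natAbs) = a.natAbs ^ 2 % (4 * b.natAbs) := by
    obtain ⟨k, rfl⟩ := hb
    have : N = a.natAbs ^ 2 + 4 * (4 * k).natAbs * k.natAbs := by
      zify
      rw [hN, sq_abs, abs_mul]
      have := abs_mul_abs_self k
      linear_combination -16 * this
    rw [this, Nat.add_mul_mod_self_left]
  rw [hmod]
  have h2 := jacobiSym.mod_right (-b) hao
  rw [Int.natAbs_neg] at h2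
  rw [← h2, jacobiSym.pow_right, jacobiSym.sq_one]
  rw [Int.isCoprime_iff_gcd_eq_one] at hab
  simpa [Int.gcd_comm, Int.gcd_def, Int.natAbs_abs] using hab

/-- Here `c = n d` with `n` the gcd of the real and imaginary parts of `c`. The congruence
`c ≡ 1 (mod 16)` makes `n` odd and `Im d` divisible by `16`, and square-freeness of `c` makes `n` and
`N(d)` coprime and square-free. -/
lemma gauss_sum_aux (c : GaussianInt) (hc : Squarefree c) (h16 : ModOne16 c) :
    quadGaussSum c = Real.sqrt (gnorm c) ∧ gnorm c % 8 = 1 := by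
  obtain ⟨A, B⟩ := c
  have h16' := (Zsqrtd.intCast_dvd (16 : ℤ) _).1 (by exact_mod_cast h16)
  simp only [Zsqrtd.re_sub, Zsqrtd.im_sub, Zsqrtd.re_one, Zsqrtd.im_one, sub_zero] at h16'
  obtain ⟨hA, hB⟩ := h16'
  have hgpos : 0 < Int.gcd A B := Int.gcd_pos_of_ne_zero_left _ (by omega)
  obtain ⟨a, b, hab, hAa, hBb⟩ := Int.exists_gcd_one hgpos
  set n := Int.gcd A B with hn
  rw [← Int.isCoprime_iff_gcd_eq_one] at hab
  set d : GaussianInt := ⟨a, b⟩ with hd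
  have hcd : (⟨A, B⟩ : GaussianInt) = (n : GaussianInt) * d := by
    ext
    · simp [hd, hAa, mul_comm]
    · simp [hd, hBb, mul_comm]
  have hAo : Odd A := by rw [Int.odd_iff]; omega
  rw [hAa, Int.odd_mul] at hAo
  obtain ⟨hao, hno⟩ := hAo
  have hno : Odd n := by exact_mod_cast hno
  have hbn : (16 : ℤ) ∣ b := by
    have h1 : IsCoprime (16 : ℤ) n := by
      rw [Int.isCoprime_iff_gcd_eq_one]
      have : Nat.Coprime (2 ^ 4) n := (Nat.coprime_two_left.2 hno).pow_left 4
      simpa [Int.gcd] using this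
    exact h1.dvd_of_dvd_mul_right (hBb ▸ hB)
  have hN : (gnorm d : ℤ) = a ^ 2 + b ^ 2 := by rw [gnorm_cast, norm_eq]
  have hodd8 : ∀ x : ℤ, Odd x → x ^ 2 % 8 = 1 := fun x hx => by
    have := Int.eight_dvd_sq_sub_one_of_odd hx; omega
  have hN8 : gnorm d % 8 = 1 := by
    obtain ⟨k, hk⟩ := hbn
    have h1 := hodd8 a hao
    rw [hk] at hN
    have : (16 * k) ^ 2 = 8 * (32 * k ^ 2) := by ring
    omega
  have hNo : Odd (gnorm d) := by rw [Nat.odd_iff]; omega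
  have hd0 : d ≠ 0 := by
    intro h; rw [h] at hN8; simp [gnorm] at hN8
  rw [hcd] at hc ⊢
  have hgc : gnorm ((n : GaussianInt) * d) = n ^ 2 * gnorm d := by rw [gnorm_mul, gnorm_natCast]
  have hprim : ∀ p : ℕ, p.Prime → ¬(p : GaussianInt) ∣ d := by
    intro p hp h
    have h1 := (Zsqrtd.intCast_dvd (p : ℤ) d).1 (by rwa [Int.cast_natCast])
    have h2 := hab.isUnit_of_dvd' h1.1 h1.2
    rw [Int.isUnit_iff_natAbs_eq, Int.natAbs_natCast] at h2
    exact hp.one_lt.ne' h2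
  obtain ⟨hrel, hsn, hsd⟩ := squarefree_mul_iff.1 hc
  have hnd : IsCoprime (n : GaussianInt) d := isRelPrime_iff_isCoprime.1 hrel
  have hsn' : Squarefree n := by
    rintro m ⟨k, hk⟩
    have := hsn m ⟨k, by rw [hk]; push_cast; ring⟩
    rw [← gnorm_isUnit, gnorm_natCast] at this
    rw [Nat.isUnit_iff]
    exact (Nat.pow_eq_one.1 this).resolve_right two_ne_zero
  have hsd' : Squarefree (gnorm d) := by
    -- `d` is radical and `ℤ/N(d)` embeds in `ℤ[i]/(d)`
    rw [← isRadical_iff_squarefree_of_ne_zero (gnorm_ne_zero hd0)]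
    intro k y hy
    have h1 : d ∣ (y : GaussianInt) ^ k := by
      obtain ⟨l, hl⟩ := hy
      have := (dvd_gnorm d).mul_right (l : GaussianInt)
      rwa [← Nat.cast_mul, ← hl, Nat.cast_pow] at this
    have h2 := hsd.isRadical k _ h1
    have := dvd_intCast_of_coprime (d := d) (m := y) hab (by rwa [Int.cast_natCast])
    exact_mod_cast this
  have hcop : Nat.Coprime (gnorm d) n := by
    have h1 : IsCoprime (n : GaussianInt) (star d) := by
      have := hnd.map (starRingEnd GaussianInt)
      rwa [map_natCast] at this
    have h2 := hnd.mul_right h1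
    rw [← gnorm_eq_mul_star] at h2
    refine Nat.Coprime.symm (Nat.coprime_of_dvd fun p hp hpn hpN => ?_)
    have h3 := h2.isUnit_of_dvd' (Nat.cast_dvd_cast (α := GaussianInt) hpn) (Nat.cast_dvd_cast hpN)
    rw [← gnorm_isUnit, gnorm_natCast] at h3
    exact hp.one_lt.ne' ((Nat.pow_eq_one.1 h3).resolve_right two_ne_zero)
  have h4 : ∀ p, p.Prime → p ∣ gnorm d → p % 4 = 1 := by
    intro p hp hpd
    have h1 : IsSquare (-1 : ZMod (gnorm d)) :=
      ZMod.isSquare_neg_one_of_eq_sq_add_sq_of_isCoprime (n := (gnorm d : ℤ)) hN hab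
    have h2 := Nat.mod_four_ne_three_of_mem_primeFactors_of_isSquare_neg_one
      (Nat.mem_primeFactors.2 ⟨hp, hpd, gnorm_ne_zero hd0⟩) h1
    have h3 := Nat.odd_iff.1 (hNo.of_dvd_nat hpd)
    omega
  refine ⟨?_, ?_⟩
  · rw [quadGaussSum_mul n hno hsn' d hd0 hab hnd hNo hsd' h4 hprim,
      jacobi_neg_im a b hab hao (by omega) _ hN,
      ← jacobiSym.quadratic_reciprocity_one_mod_four (by omega : gnorm d % 4 = 1) hno,
      ← sq, jacobiSym.sq_one (by exact_mod_cast hcop), hgc]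
    push_cast
    rw [Real.sqrt_mul (by positivity), Real.sqrt_sq (by positivity)]
    push_cast; ring
  · rw [hgc]
    have := hodd8 n (by exact_mod_cast hno)
    rw [Nat.mul_mod, hN8]
    have h : (n ^ 2 % 8 : ℕ) = 1 := by exact_mod_cast this
    rw [h]

/-- Evaluation of the Gauss sum: for square-free `c ≡ 1 (mod 16)`,
`g(c) = (-1/c)₄ · N(c)^{1/2} = N(c)^{1/2}` (with `g(1) = 1`). -/
theorem gauss_sum_eval (c : GaussianInt) (hc : Squarefree c) (h16 : ModOne16 c) :
    quadGaussSum c = toComplex (quarticSymbol (-1) c) * Real.sqrt (gnorm c) ∧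
    quadGaussSum c = Real.sqrt (gnorm c) := by
  obtain ⟨h1, h2⟩ := gauss_sum_aux c hc h16
  rw [quarticSymbol_neg_one c hc.ne_zero (by rw [Nat.odd_iff]; omega), if_pos h2, map_one, one_mul]
  exact ⟨h1, h1⟩

end
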